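/- arXiv:1112.3977 — 2 statements merged into one kernel-verified Lean document; each statement's English description precedes it below -/
import Mathlib

section
/- Let n ≥ 3 be an integer, m > 0, and k ∈ (0, (m+n+2)/2]. Let w: ℝⁿ → (0,∞) be smooth with F = ∫ |∇w|² dx, A = ∫ w^{2(m+n−k)/(m+n−2)} dx, B = ∫ w^{2(m+n)/(m+n−2)} dx finite and positive. For a smooth positive function v on ℝⁿ define the conformal GNS functional Q_k(v, w) = (∫ [|∇w|² + ((m+n−2)/(4(m+n−1)))·(−2mΔ(log v) − m(m+1)|∇ log v|²)·w²] v^m dx) · (∫ w^{2(m+n−k)/(m+n−2)} v^{m−k} dx)^{2m/(nk)} / (∫ w^{2(m+n)/(m+n−2)} v^m dx)^{(2m+k(n−2))/(nk)}. Suppose that w is a critical point at v ≡ 1 for variations of the density v, i.e. for every χ ∈ C_c^∞(ℝⁿ) the function t ↦ Q_k(1 + tχ, w) has derivative 0 at t = 0. Then w satisfies at every point of ℝⁿ the identity |∇w|² − ((m+n−2)/(2(m+n−1)))·Δ(w²) + [2(m−k)/(nk)]·(F/A)·w^{2(m+n−k)/(m+n−2)} = [(2m+k(n−2))/(nk)]·(F/B)·w^{2(m+n)/(m+n−2)}.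 -/
open MeasureTheory
open scoped RealInnerProductSpace

noncomputable section

/-- The Euclidean Laplacian `Δf = Σᵢ ∂²f/∂xᵢ²`. -/
def lapl {n : ℕ} (f : EuclideanSpace ℝ (Fin n) → ℝ) (x : EuclideanSpace ℝ (Fin n)) : ℝ :=
  ∑ i, iteratedFDeriv ℝ 2 f x ![EuclideanSpace.single i 1, EuclideanSpace.single i 1]

/-- The Dirichlet energy `F(w) = ∫ |∇w|²`. -/
def gnsF (n : ℕ) (w : EuclideanSpace ℝ (Fin n) → ℝ) : ℝ :=
  ∫ x, ‖gradient w x‖ ^ 2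

/-- `A(w) = ∫ w^{2(m+n-k)/(m+n-2)}`. -/
def gnsA (n : ℕ) (m k : ℝ) (w : EuclideanSpace ℝ (Fin n) → ℝ) : ℝ :=
  ∫ x, w x ^ (2 * (m + n - k) / (m + n - 2))

/-- `B(w) = ∫ w^{2(m+n)/(m+n-2)}`. -/
def gnsB (n : ℕ) (m : ℝ) (w : EuclideanSpace ℝ (Fin n) → ℝ) : ℝ :=
  ∫ x, w x ^ (2 * (m + n) / (m + n - 2))

/-- The conformal GNS functional of the smooth metric measure space
`(ℝⁿ, flat metric, v^m dx, m)`, evaluated at `w`; the zeroth-order term in the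
energy is the weighted scalar curvature `R_φ^m = -2mΔ(log v) - m(m+1)|∇ log v|²`. -/
def gnsQv (n : ℕ) (m k : ℝ) (v w : EuclideanSpace ℝ (Fin n) → ℝ) : ℝ :=
  (∫ x, (‖gradient w x‖ ^ 2 +
      ((m + n - 2) / (4 * (m + n - 1))) *
        (-(2 * m) * lapl (fun y => Real.log (v y)) x -
          m * (m + 1) * ‖gradient (fun y => Real.log (v y)) x‖ ^ 2) * w x ^ 2) *
        v x ^ m) *
    (∫ x, w x ^ (2 * (m + n - k) / (m + n - 2)) * v x ^ (m - k)) ^ (2 * m / ((n : ℝ) * k)) /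
    (∫ x, w x ^ (2 * (m + n) / (m + n - 2)) * v x ^ m) ^
      ((2 * m + k * ((n : ℝ) - 2)) / ((n : ℝ) * k))

/-!
For `v = 1 + tχ` the curvature term is polynomial in the derivatives of `v`:
`v ^ m * R_φ^m = -2 m v ^ (m - 1) Δv - m (m - 1) v ^ (m - 2) |∇v|²`. Since `∇v = t ∇χ`, the
`|∇v|²` term is of second order in `t`, while the first-order contribution `-2 m ∫ w² Δχ` of `Δv`
becomes `-2 m ∫ χ Δ(w²)` by Green's identity. Differentiating the quotient at `t = 0` thus tests a
single continuous function against `χ`, and it vanishes by the fundamental lemma of the calculus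
of variations.
-/

open Filter
open scoped ContDiff Gradient Laplacian Topology

section DerivativeOfIntegral

theorem eventually_forall_abs_le_mul_mem {s : Set ℝ} (hs : s ∈ 𝓝 0) (M : ℝ) :
    ∀ᶠ t in 𝓝 (0 : ℝ), ∀ c : ℝ, |c| ≤ M → t * c ∈ s := by
  filter_upwards [(NormedSpace.isVonNBounded_closedBall ℝ ℝ M hs).eventually_nhds_zero
    (mem_of_mem_nhds hs)] with t ht c hc
  exact ht (mem_closedBall_zero_iff.2 hc)

variable {X : Type*} [MeasurableSpace X] {μ : Measure X} {φ : ℝ → ℝ} {φ' M : ℝ} {a χ : X → ℝ}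

theorem aestronglyMeasurable_mul_comp_mul (hφ : Measurable φ) (ha : AEStronglyMeasurable a μ)
    (hχ : AEMeasurable χ μ) (t : ℝ) :
    AEStronglyMeasurable (fun x => a x * φ (t * χ x)) μ :=
  ha.mul (hφ.comp_aemeasurable (hχ.const_mul t)).aestronglyMeasurable

theorem eventually_integrable_mul_comp_mul (hφm : Measurable φ) (hφ : ContinuousAt φ 0)
    (ha : Integrable a μ) (hχ : AEMeasurable χ μ) (hM : ∀ᵐ x ∂μ, |χ x| ≤ M) :
    ∀ᶠ t in 𝓝 (0 : ℝ), Integrable (fun x => a x * φ (t * χ x)) μ := by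
  have hnear : {u | |φ u| < |φ 0| + 1} ∈ 𝓝 (0 : ℝ) := hφ.abs.eventually_lt_const (lt_add_one _)
  filter_upwards [eventually_forall_abs_le_mul_mem hnear M] with t ht
  refine ha.mul_bdd (hφm.comp_aemeasurable (hχ.const_mul t)).aestronglyMeasurable
    (c := |φ 0| + 1) ?_
  filter_upwards [hM] with x hx using (ht _ hx).le

theorem hasDerivAt_integral_mul_comp_mul (hφm : Measurable φ) (hφ : HasStrictDerivAt φ φ' 0)
    (ha : Integrable a μ) (hχ : AEMeasurable χ μ) (hM : ∀ᵐ x ∂μ, |χ x| ≤ M) :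
    HasDerivAt (fun t : ℝ => ∫ x, a x * φ (t * χ x) ∂μ) (φ' * ∫ x, χ x * a x ∂μ) 0 := by
  obtain ⟨K, s, hs, hlip⟩ := hφ.hasStrictFDerivAt.exists_lipschitzOnWith
  have hderiv := (hasDerivAt_integral_of_dominated_loc_of_lip (μ := μ)
    (F := fun t x => a x * φ (t * χ x)) (F' := fun x => φ' * (χ x * a x))
    (bound := fun x => ‖a x‖ * (K * M)) (eventually_forall_abs_le_mul_mem hs M)
    (.of_forall (aestronglyMeasurable_mul_comp_mul hφm ha.1 hχ))
    (by simpa only [zero_mul] using ha.mul_const (φ 0))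
    ((hχ.aestronglyMeasurable.mul ha.1).const_mul φ') ?_ (ha.norm.mul_const _) ?_).2
  · rwa [integral_const_mul] at hderiv
  · filter_upwards [hM] with x hx
    have hM₀ : 0 ≤ M := (abs_nonneg _).trans hx
    refine LipschitzOnWith.of_dist_le_mul fun t ht t' ht' => ?_
    have hφtt' := hlip.dist_le_mul _ (ht _ hx) _ (ht' _ hx)
    simp only [Real.dist_eq, ← sub_mul, ← mul_sub, abs_mul, Real.coe_nnabs, Real.norm_eq_abs,
      NNReal.abs_eq, abs_of_nonneg hM₀, abs_abs] at hφtt' ⊢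
    calc |a x| * |φ (t * χ x) - φ (t' * χ x)| ≤ |a x| * (K * (|t - t'| * |χ x|)) := by gcongr
      _ ≤ |a x| * (K * (|t - t'| * M)) := by gcongr
      _ = |a x| * (K * M) * |t - t'| := by ring
  · refine .of_forall fun x => ?_
    have hφ₀ : HasDerivAt φ φ' (0 * χ x) := by simpa only [zero_mul] using hφ.hasDerivAt
    exact ((hφ₀.comp 0 (hasDerivAt_mul_const (χ x))).const_mul (a x)).congr_deriv (by ring)

theorem hasStrictDerivAt_one_add_rpow (s : ℝ) :
    HasStrictDerivAt (fun u : ℝ => (1 + u) ^ s) s 0 := by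
  simpa [Function.comp_def] using
    (Real.hasStrictDerivAt_rpow_const (x := 1 + 0) (p := s) (.inl (by simp))).comp 0
      ((hasStrictDerivAt_id (0 : ℝ)).const_add 1)

theorem measurable_one_add_rpow (s : ℝ) : Measurable fun u : ℝ => (1 + u) ^ s :=
  (measurable_const_add 1).pow_const s

theorem eventually_integrable_mul_one_add_rpow (ha : Integrable a μ) (hχ : AEMeasurable χ μ)
    (hM : ∀ᵐ x ∂μ, |χ x| ≤ M) (s : ℝ) :
    ∀ᶠ t in 𝓝 (0 : ℝ), Integrable (fun x => a x * (1 + t * χ x) ^ s) μ :=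
  eventually_integrable_mul_comp_mul (measurable_one_add_rpow s)
    (hasStrictDerivAt_one_add_rpow s).hasDerivAt.continuousAt ha hχ hM

theorem hasDerivAt_integral_mul_one_add_rpow (ha : Integrable a μ) (hχ : AEMeasurable χ μ)
    (hM : ∀ᵐ x ∂μ, |χ x| ≤ M) (s : ℝ) :
    HasDerivAt (fun t : ℝ => ∫ x, a x * (1 + t * χ x) ^ s ∂μ) (s * ∫ x, χ x * a x ∂μ) 0 :=
  hasDerivAt_integral_mul_comp_mul (measurable_one_add_rpow s)
    (hasStrictDerivAt_one_add_rpow s) ha hχ hM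

end DerivativeOfIntegral

theorem add_eq_of_hasDerivAt_mul_rpow_div_rpow_zero {N D₁ D₂ : ℝ → ℝ} {N' D₁' D₂' α β t : ℝ}
    (hN : HasDerivAt N N' t) (hD₁ : HasDerivAt D₁ D₁' t) (hD₂ : HasDerivAt D₂ D₂' t)
    (h₁ : 0 < D₁ t) (h₂ : 0 < D₂ t)
    (hcrit : HasDerivAt (fun s => N s * D₁ s ^ α / D₂ s ^ β) 0 t) :
    N' + α * (N t / D₁ t) * D₁' = β * (N t / D₂ t) * D₂' := by
  have hα : D₁ t ^ α ≠ 0 := (Real.rpow_pos_of_pos h₁ α).ne'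
  have hβ : D₂ t ^ β ≠ 0 := (Real.rpow_pos_of_pos h₂ β).ne'
  have hquot := ((hN.mul (hD₁.rpow_const (p := α) (.inl h₁.ne'))).div
    (hD₂.rpow_const (p := β) (.inl h₂.ne')) hβ).unique hcrit
  rw [Real.rpow_sub_one h₁.ne', Real.rpow_sub_one h₂.ne'] at hquot
  have hfactor : (N' + α * (N t / D₁ t) * D₁' - β * (N t / D₂ t) * D₂') *
      (D₁ t ^ α / D₂ t ^ β) = 0 := by
    rw [← hquot]
    simp only [Pi.mul_apply]
    field_simp [h₁.ne', h₂.ne']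
  exact sub_eq_zero.1 ((mul_eq_zero.1 hfactor).resolve_right (div_ne_zero hα hβ))

theorem integrable_mul_of_hasCompactSupport_left {X : Type*} [TopologicalSpace X]
    [MeasurableSpace X] [OpensMeasurableSpace X] {μ : Measure X} [IsFiniteMeasureOnCompacts μ]
    {f g : X → ℝ} (hf : Continuous f) (hfc : HasCompactSupport f) (hg : Continuous g) :
    Integrable (fun x => f x * g x) μ :=
  (hf.mul hg).integrable_of_hasCompactSupport hfc.mul_right

section SecondDerivative

variable {E : Type*} [NormedAddCommGroup E] [NormedSpace ℝ E] {f g : E → ℝ}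

theorem continuous_fderiv_fderiv_apply (hf : ContDiff ℝ 2 f) (e e' : E) :
    Continuous fun x => fderiv ℝ (fderiv ℝ f) x e e' :=
  have hf' : ContDiff ℝ 1 (fderiv ℝ f) := hf.fderiv_right le_rfl
  ((hf'.continuous_fderiv one_ne_zero).clm_apply continuous_const).clm_apply continuous_const

theorem fderiv_fderiv_apply {x : E} (hf : DifferentiableAt ℝ (fderiv ℝ f) x) (e e' : E) :
    fderiv ℝ (fun y => fderiv ℝ f y e) x e' = fderiv ℝ (fderiv ℝ f) x e' e := by
  simp [fderiv_clm_apply hf (differentiableAt_const e)]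

variable [FiniteDimensional ℝ E] [MeasurableSpace E] [BorelSpace E] {μ : Measure E}
  [μ.IsAddHaarMeasure]

theorem integral_fderiv_apply_mul_eq_neg (hf : ContDiff ℝ 1 f) (hfc : HasCompactSupport f)
    (hg : ContDiff ℝ 1 g) (e : E) :
    ∫ x, fderiv ℝ f x e * g x ∂μ = -∫ x, f x * fderiv ℝ g x e ∂μ := by
  have hf' : Continuous fun x => fderiv ℝ f x e :=
    (hf.continuous_fderiv one_ne_zero).clm_apply continuous_const
  have hg' : Continuous fun x => fderiv ℝ g x e :=
    (hg.continuous_fderiv one_ne_zero).clm_apply continuous_const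
  rw [integral_mul_fderiv_eq_neg_fderiv_mul_of_integrable, neg_neg]
  · exact integrable_mul_of_hasCompactSupport_left hf' (hfc.fderiv_apply ℝ e) hg.continuous
  · exact integrable_mul_of_hasCompactSupport_left hf.continuous hfc hg'
  · exact integrable_mul_of_hasCompactSupport_left hf.continuous hfc hg.continuous
  · exact fun x _ => hf.differentiable one_ne_zero x
  · exact fun x _ => hg.differentiable one_ne_zero x

theorem integral_fderiv_fderiv_apply_mul_eq (hf : ContDiff ℝ 2 f) (hfc : HasCompactSupport f)
    (hg : ContDiff ℝ 2 g) (e : E) :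
    ∫ x, fderiv ℝ (fderiv ℝ f) x e e * g x ∂μ = ∫ x, f x * fderiv ℝ (fderiv ℝ g) x e e ∂μ := by
  have hf' : ContDiff ℝ 1 (fderiv ℝ f) := hf.fderiv_right le_rfl
  have hg' : ContDiff ℝ 1 (fderiv ℝ g) := hg.fderiv_right le_rfl
  simp_rw [← fderiv_fderiv_apply (hf'.differentiable one_ne_zero _),
    ← fderiv_fderiv_apply (hg'.differentiable one_ne_zero _)]
  rw [integral_fderiv_apply_mul_eq_neg (hf'.clm_apply contDiff_const) (hfc.fderiv_apply ℝ e)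
      (hg.of_le one_le_two),
    integral_fderiv_apply_mul_eq_neg (hf.of_le one_le_two) hfc (hg'.clm_apply contDiff_const),
    neg_neg]

end SecondDerivative

section Laplacian

variable {E : Type*} [NormedAddCommGroup E] [InnerProductSpace ℝ E] [FiniteDimensional ℝ E]
  {ι : Type*} [Fintype ι] {f g : E → ℝ} {φ : ℝ → ℝ} {x : E}

theorem laplacian_eq_sum_fderiv (b : OrthonormalBasis ι ℝ E) (f : E → ℝ) (x : E) :
    Δ f x = ∑ i, fderiv ℝ (fderiv ℝ f) x (b i) (b i) := by
  simp [InnerProductSpace.laplacian_eq_iteratedFDeriv_orthonormalBasis f b,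
    iteratedFDeriv_two_apply]

theorem norm_gradient_sq_eq_sum (b : OrthonormalBasis ι ℝ E) (f : E → ℝ) (x : E) :
    ‖∇ f x‖ ^ 2 = ∑ i, fderiv ℝ f x (b i) ^ 2 := by
  simp [← b.sum_sq_norm_inner_left, inner_gradient_left]

theorem continuous_gradient (hf : ContDiff ℝ 1 f) : Continuous (∇ f) :=
  (InnerProductSpace.toDual ℝ E).symm.continuous.comp (hf.continuous_fderiv one_ne_zero)

theorem hasCompactSupport_gradient (hf : HasCompactSupport f) : HasCompactSupport (∇ f) :=
  (hf.fderiv ℝ).comp_left (map_zero (InnerProductSpace.toDual ℝ E).symm)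

theorem continuous_laplacian (hf : ContDiff ℝ 2 f) : Continuous (Δ f) := by
  rw [funext (laplacian_eq_sum_fderiv (stdOrthonormalBasis ℝ E) f)]
  exact continuous_finsetSum _ fun i _ => continuous_fderiv_fderiv_apply hf _ _

theorem hasCompactSupport_laplacian (hf : HasCompactSupport f) : HasCompactSupport (Δ f) := by
  rw [funext (laplacian_eq_sum_fderiv (stdOrthonormalBasis ℝ E) f)]
  let b := stdOrthonormalBasis ℝ E
  exact ((hf.fderiv ℝ).fderiv ℝ).comp_left
    (g := fun L : E →L[ℝ] E →L[ℝ] ℝ => ∑ i, L (b i) (b i)) (by simp)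

theorem gradient_comp (hφ : DifferentiableAt ℝ φ (f x)) (hf : DifferentiableAt ℝ f x) :
    ∇ (fun y => φ (f y)) x = deriv φ (f x) • ∇ f x := by
  have hcomp : HasFDerivAt (fun y => φ (f y)) (deriv φ (f x) • fderiv ℝ f x) x :=
    hφ.hasDerivAt.comp_hasFDerivAt x hf.hasFDerivAt
  simp [gradient, hcomp.fderiv]

theorem laplacian_comp (hφ : ContDiffAt ℝ 2 φ (f x)) (hf : ContDiffAt ℝ 2 f x) :
    Δ (fun y => φ (f y)) x = deriv φ (f x) * Δ f x + deriv (deriv φ) (f x) * ‖∇ f x‖ ^ 2 := by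
  have hfderiv : fderiv ℝ (fun y => φ (f y)) =ᶠ[𝓝 x] fun y => deriv φ (f y) • fderiv ℝ f y := by
    filter_upwards [hf.eventually (by simp), hf.continuousAt.eventually (hφ.eventually (by simp))]
      with y hfy hφy
    exact ((hφy.differentiableAt two_ne_zero).hasDerivAt.comp_hasFDerivAt y
      (hfy.differentiableAt two_ne_zero).hasFDerivAt).fderiv
  have hf' : DifferentiableAt ℝ (fderiv ℝ f) x :=
    (hf.fderiv_right (m := 1) le_rfl).differentiableAt one_ne_zero
  have hφ' : DifferentiableAt ℝ (deriv φ) (f x) :=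
    (hφ.derivWithin (m := 1) le_rfl).differentiableAt one_ne_zero
  have hφf : HasFDerivAt (fun y => deriv φ (f y)) (deriv (deriv φ) (f x) • fderiv ℝ f x) x :=
    hφ'.hasDerivAt.comp_hasFDerivAt x (hf.differentiableAt two_ne_zero).hasFDerivAt
  let b := stdOrthonormalBasis ℝ E
  rw [laplacian_eq_sum_fderiv b, laplacian_eq_sum_fderiv b, norm_gradient_sq_eq_sum b,
    hfderiv.fderiv_eq, (hφf.fun_smul hf'.hasFDerivAt).fderiv, Finset.mul_sum, Finset.mul_sum,
    ← Finset.sum_add_distrib]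
  refine Finset.sum_congr rfl fun i _ => ?_
  simp
  ring

theorem laplacian_log (hf : ContDiffAt ℝ 2 f x) (hx : f x ≠ 0) :
    Δ (fun y => Real.log (f y)) x = Δ f x / f x - ‖∇ f x‖ ^ 2 / f x ^ 2 := by
  rw [laplacian_comp (Real.contDiffAt_log.2 hx) hf, Real.deriv_log', deriv_inv]
  ring

theorem norm_gradient_log_sq (hf : DifferentiableAt ℝ f x) (hx : f x ≠ 0) :
    ‖∇ (fun y => Real.log (f y)) x‖ ^ 2 = ‖∇ f x‖ ^ 2 / f x ^ 2 := by
  rw [gradient_comp (Real.differentiableAt_log hx) hf, Real.deriv_log, norm_smul, mul_pow,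
    Real.norm_eq_abs, sq_abs]
  ring

theorem gradient_const_add_const_mul (a t : ℝ) (hf : DifferentiableAt ℝ f x) :
    ∇ (fun y => a + t * f y) x = t • ∇ f x := by
  rw [gradient_comp (φ := fun u => a + t * u) (by fun_prop) hf]
  simp

theorem laplacian_const_add_const_mul (a t : ℝ) (hf : ContDiffAt ℝ 2 f x) :
    Δ (fun y => a + t * f y) x = t * Δ f x := by
  rw [laplacian_comp (φ := fun u => a + t * u) (by fun_prop) hf]
  simp

variable [MeasurableSpace E] [BorelSpace E] {μ : Measure E} [μ.IsAddHaarMeasure]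

theorem integrable_laplacian_mul (hf : ContDiff ℝ 2 f) (hfc : HasCompactSupport f)
    (hg : Continuous g) : Integrable (fun x => Δ f x * g x) μ :=
  integrable_mul_of_hasCompactSupport_left (continuous_laplacian hf)
    (hasCompactSupport_laplacian hfc) hg

theorem integrable_norm_gradient_sq_mul (hf : ContDiff ℝ 1 f) (hfc : HasCompactSupport f)
    (hg : Continuous g) : Integrable (fun x => ‖∇ f x‖ ^ 2 * g x) μ :=
  integrable_mul_of_hasCompactSupport_left ((continuous_gradient hf).norm.pow 2)
    ((hasCompactSupport_gradient hfc).comp_left (g := fun v : E => ‖v‖ ^ 2) (by simp)) hg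

theorem integral_laplacian_mul_eq (hf : ContDiff ℝ 2 f) (hfc : HasCompactSupport f)
    (hg : ContDiff ℝ 2 g) : ∫ x, Δ f x * g x ∂μ = ∫ x, f x * Δ g x ∂μ := by
  simp_rw [laplacian_eq_sum_fderiv (stdOrthonormalBasis ℝ E), Finset.sum_mul, Finset.mul_sum]
  rw [integral_finsetSum, integral_finsetSum]
  · exact Finset.sum_congr rfl fun i _ => integral_fderiv_fderiv_apply_mul_eq hf hfc hg _
  · exact fun i _ => integrable_mul_of_hasCompactSupport_left hf.continuous hfc
      (continuous_fderiv_fderiv_apply hg _ _)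
  · exact fun i _ => integrable_mul_of_hasCompactSupport_left
      (continuous_fderiv_fderiv_apply hf _ _)
      (((hfc.fderiv ℝ).fderiv ℝ).comp_left (g := fun L : E →L[ℝ] E →L[ℝ] ℝ => L _ _) rfl)
      hg.continuous

end Laplacian

section ConformalEnergy

variable {E : Type*} [NormedAddCommGroup E] [InnerProductSpace ℝ E] [FiniteDimensional ℝ E]

/-- The weighted scalar curvature `R_φ^m = -2mΔ(log v) - m(m+1)|∇ log v|²`, with `φ = -m log v`, of
the flat smooth metric measure space with density `v ^ m`. -/
def weightedScalarCurvature (m : ℝ) (v : E → ℝ) (x : E) : ℝ :=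
  -(2 * m) * Δ (fun y => Real.log (v y)) x - m * (m + 1) * ‖∇ (fun y => Real.log (v y)) x‖ ^ 2

theorem weightedScalarCurvature_mul_rpow {v : E → ℝ} {x : E} (hv : ContDiffAt ℝ 2 v x)
    (hx : 0 < v x) (m : ℝ) :
    weightedScalarCurvature m v x * v x ^ m =
      -(2 * m) * Δ v x * v x ^ (m - 1) - m * (m - 1) * ‖∇ v x‖ ^ 2 * v x ^ (m - 2) := by
  rw [weightedScalarCurvature, laplacian_log hv hx.ne',
    norm_gradient_log_sq (hv.differentiableAt two_ne_zero) hx.ne', Real.rpow_sub_one hx.ne',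
    Real.rpow_sub hx, Real.rpow_two]
  field_simp
  ring

variable [MeasurableSpace E]

/-- The energy `∫ (|∇w|² + c R_φ^m w²) v^m dμ` of `w` for the density `v`, with an arbitrary
coefficient `c` of the curvature; the conformal GNS functional has
`c = (m + n - 2) / (4 (m + n - 1))`. -/
def conformalEnergy (μ : Measure E) (m c : ℝ) (v w : E → ℝ) : ℝ :=
  ∫ x, (‖∇ w x‖ ^ 2 + c * weightedScalarCurvature m v x * w x ^ 2) * v x ^ m ∂μ

variable {μ : Measure E} {m c t : ℝ} {w χ : E → ℝ}

theorem conformalEnergy_one_add_mul (hχ : ContDiff ℝ 2 χ) (hpos : ∀ x, 0 < 1 + t * χ x)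
    (h₀ : Integrable (fun x => ‖∇ w x‖ ^ 2 * (1 + t * χ x) ^ m) μ)
    (h₁ : Integrable (fun x => Δ χ x * w x ^ 2 * (1 + t * χ x) ^ (m - 1)) μ)
    (h₂ : Integrable (fun x => ‖∇ χ x‖ ^ 2 * w x ^ 2 * (1 + t * χ x) ^ (m - 2)) μ) :
    conformalEnergy μ m c (fun x => 1 + t * χ x) w =
      (∫ x, ‖∇ w x‖ ^ 2 * (1 + t * χ x) ^ m ∂μ)
        - 2 * m * c * t * (∫ x, Δ χ x * w x ^ 2 * (1 + t * χ x) ^ (m - 1) ∂μ)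
        - c * m * (m - 1) * t ^ 2 * ∫ x, ‖∇ χ x‖ ^ 2 * w x ^ 2 * (1 + t * χ x) ^ (m - 2) ∂μ := by
  rw [← integral_const_mul, ← integral_const_mul, ← integral_sub h₀ (h₁.const_mul _),
    ← integral_sub (h₀.sub' (h₁.const_mul _)) (h₂.const_mul _)]
  refine integral_congr_ae (.of_forall fun x => ?_)
  have hcurv := weightedScalarCurvature_mul_rpow (v := fun y => 1 + t * χ y) (x := x)
    (by fun_prop) (hpos x) m
  rw [laplacian_const_add_const_mul 1 t hχ.contDiffAt,
    gradient_const_add_const_mul 1 t (hχ.differentiable two_ne_zero x), norm_smul, mul_pow,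
    Real.norm_eq_abs, sq_abs] at hcurv
  linear_combination c * w x ^ 2 * hcurv

theorem conformalEnergy_one : conformalEnergy μ m c (fun _ => 1) w = ∫ x, ‖∇ w x‖ ^ 2 ∂μ := by
  simp [conformalEnergy, weightedScalarCurvature]

theorem hasDerivAt_sub_mul_sub_sq_mul_zero {G₀ G₁ G₂ : ℝ → ℝ} {G₀' : ℝ} (a b : ℝ)
    (h₀ : HasDerivAt G₀ G₀' 0) (h₁ : DifferentiableAt ℝ G₁ 0) (h₂ : DifferentiableAt ℝ G₂ 0) :
    HasDerivAt (fun t => G₀ t - a * t * G₁ t - b * t ^ 2 * G₂ t) (G₀' - a * G₁ 0) 0 := by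
  have ha : HasDerivAt (fun t : ℝ => a * t) a 0 := hasDerivAt_const_mul a
  have hb : HasDerivAt (fun t : ℝ => b * t ^ 2) 0 0 := by
    simpa using (hasDerivAt_pow 2 (0 : ℝ)).const_mul b
  simpa using (h₀.fun_sub (ha.fun_mul h₁.hasDerivAt)).fun_sub (hb.fun_mul h₂.hasDerivAt)

variable [BorelSpace E]

theorem hasDerivAt_conformalEnergy_one_add_mul [μ.IsAddHaarMeasure] (hw : ContDiff ℝ 2 w)
    (hF : Integrable (fun x => ‖∇ w x‖ ^ 2) μ) (hχ : ContDiff ℝ 2 χ)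
    (hχc : HasCompactSupport χ) :
    HasDerivAt (fun t : ℝ => conformalEnergy μ m c (fun x => 1 + t * χ x) w)
      (m * ∫ x, χ x * (‖∇ w x‖ ^ 2 - 2 * c * Δ (fun y => w y ^ 2) x) ∂μ) 0 := by
  obtain ⟨M, hM⟩ := hχc.exists_bound_of_continuous hχ.continuous
  simp only [Real.norm_eq_abs] at hM
  have hM_ae : ∀ᵐ x ∂μ, |χ x| ≤ M := .of_forall hM
  have hχm : AEMeasurable χ μ := hχ.continuous.aemeasurable
  have h₁ : Integrable (fun x => Δ χ x * w x ^ 2) μ :=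
    integrable_laplacian_mul hχ hχc (hw.continuous.pow 2)
  have h₂ : Integrable (fun x => ‖∇ χ x‖ ^ 2 * w x ^ 2) μ :=
    integrable_norm_gradient_sq_mul (hχ.of_le one_le_two) hχc (hw.continuous.pow 2)
  have d₀ := hasDerivAt_integral_mul_one_add_rpow hF hχm hM_ae m
  have d₁ := hasDerivAt_integral_mul_one_add_rpow h₁ hχm hM_ae (m - 1)
  have d₂ := hasDerivAt_integral_mul_one_add_rpow h₂ hχm hM_ae (m - 2)
  refine ((hasDerivAt_sub_mul_sub_sq_mul_zero (2 * m * c) (c * m * (m - 1)) d₀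
    d₁.differentiableAt d₂.differentiableAt).congr_of_eventuallyEq ?_).congr_deriv ?_
  · filter_upwards [eventually_forall_abs_le_mul_mem (Ioi_mem_nhds neg_one_lt_zero) M,
      eventually_integrable_mul_one_add_rpow hF hχm hM_ae m,
      eventually_integrable_mul_one_add_rpow h₁ hχm hM_ae (m - 1),
      eventually_integrable_mul_one_add_rpow h₂ hχm hM_ae (m - 2)] with t ht i₀ i₁ i₂
    exact conformalEnergy_one_add_mul hχ (fun x => neg_lt_iff_pos_add'.1 (ht _ (hM x))) i₀ i₁ i₂
  · have hχgrad : Integrable (fun x => χ x * ‖∇ w x‖ ^ 2) μ :=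
      integrable_mul_of_hasCompactSupport_left hχ.continuous hχc
        ((continuous_gradient (hw.of_le one_le_two)).norm.pow 2)
    have hχlapl : Integrable (fun x => χ x * Δ (fun y => w y ^ 2) x) μ :=
      integrable_mul_of_hasCompactSupport_left hχ.continuous hχc (continuous_laplacian (hw.pow 2))
    have hsplit : ∫ x, χ x * (‖∇ w x‖ ^ 2 - 2 * c * Δ (fun y => w y ^ 2) x) ∂μ =
        (∫ x, χ x * ‖∇ w x‖ ^ 2 ∂μ) - 2 * c * ∫ x, χ x * Δ (fun y => w y ^ 2) x ∂μ := by
      rw [← integral_const_mul, ← integral_sub hχgrad (hχlapl.const_mul _)]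
      exact integral_congr_ae (.of_forall fun x => by ring)
    simp only [zero_mul, add_zero, Real.one_rpow, mul_one, hsplit,
      integral_laplacian_mul_eq hχ hχc (hw.pow 2)]
    ring

theorem eq_zero_of_forall_integral_contDiff_mul_eq_zero [IsLocallyFiniteMeasure μ]
    [μ.IsOpenPosMeasure] {f : E → ℝ} (hf : Continuous f)
    (h : ∀ χ : E → ℝ, ContDiff ℝ ∞ χ → HasCompactSupport χ → ∫ x, χ x * f x ∂μ = 0) : f = 0 :=
  (hf.ae_eq_iff_eq μ continuous_zero).1
    (ae_eq_zero_of_integral_contDiff_smul_eq_zero hf.locallyIntegrable h)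

theorem conformalEnergy_euler_lagrange [μ.IsAddHaarMeasure] {a b : E → ℝ} {r s α β : ℝ}
    (hw : ContDiff ℝ 2 w) (hF : Integrable (fun x => ‖∇ w x‖ ^ 2) μ)
    (ha : Continuous a) (ha_int : Integrable a μ) (ha_pos : 0 < ∫ x, a x ∂μ)
    (hb : Continuous b) (hb_int : Integrable b μ) (hb_pos : 0 < ∫ x, b x ∂μ)
    (hcrit : ∀ χ : E → ℝ, ContDiff ℝ ∞ χ → HasCompactSupport χ →
      HasDerivAt (fun t : ℝ => conformalEnergy μ m c (fun x => 1 + t * χ x) w *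
        (∫ x, a x * (1 + t * χ x) ^ r ∂μ) ^ α / (∫ x, b x * (1 + t * χ x) ^ s ∂μ) ^ β) 0 0)
    (x : E) :
    m * (‖∇ w x‖ ^ 2 - 2 * c * Δ (fun y => w y ^ 2) x) +
        α * r * ((∫ y, ‖∇ w y‖ ^ 2 ∂μ) / ∫ y, a y ∂μ) * a x =
      β * s * ((∫ y, ‖∇ w y‖ ^ 2 ∂μ) / ∫ y, b y ∂μ) * b x := by
  set F := ∫ y, ‖∇ w y‖ ^ 2 ∂μ
  set A := ∫ y, a y ∂μ
  set B := ∫ y, b y ∂μ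
  set g : E → ℝ := fun y => ‖∇ w y‖ ^ 2 - 2 * c * Δ (fun z => w z ^ 2) y
  have hg : Continuous g := ((continuous_gradient (hw.of_le one_le_two)).norm.pow 2).sub
    ((continuous_laplacian (hw.pow 2)).const_mul _)
  suffices h : (fun y => m * g y + α * r * (F / A) * a y - β * s * (F / B) * b y) = 0 from
    sub_eq_zero.1 (congrFun h x)
  refine eq_zero_of_forall_integral_contDiff_mul_eq_zero (μ := μ) (by fun_prop)
    fun χ hχ hχc => ?_
  obtain ⟨M, hM⟩ := hχc.exists_bound_of_continuous hχ.continuous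
  have hM_ae : ∀ᵐ x ∂μ, |χ x| ≤ M := .of_forall hM
  have hχm : AEMeasurable χ μ := hχ.continuous.aemeasurable
  have hvar := add_eq_of_hasDerivAt_mul_rpow_div_rpow_zero
    (hasDerivAt_conformalEnergy_one_add_mul (c := c) hw hF (contDiff_infty.1 hχ 2) hχc)
    (hasDerivAt_integral_mul_one_add_rpow ha_int hχm hM_ae r)
    (hasDerivAt_integral_mul_one_add_rpow hb_int hχm hM_ae s)
    (by simpa using! ha_pos) (by simpa using! hb_pos) (hcrit χ hχ hχc)
  simp only [zero_mul, add_zero, Real.one_rpow, mul_one, conformalEnergy_one] at hvar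
  have hχg := integrable_mul_of_hasCompactSupport_left (μ := μ) hχ.continuous hχc hg
  have hχa := integrable_mul_of_hasCompactSupport_left (μ := μ) hχ.continuous hχc ha
  have hχb := integrable_mul_of_hasCompactSupport_left (μ := μ) hχ.continuous hχc hb
  calc ∫ y, χ y * (m * g y + α * r * (F / A) * a y - β * s * (F / B) * b y) ∂μ
      = ∫ y, (m * (χ y * g y) + α * r * (F / A) * (χ y * a y)) -
          β * s * (F / B) * (χ y * b y) ∂μ := integral_congr_ae (.of_forall fun y => by ring)
    _ = m * (∫ y, χ y * g y ∂μ) + α * r * (F / A) * (∫ y, χ y * a y ∂μ) -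
          β * s * (F / B) * ∫ y, χ y * b y ∂μ := by
        rw [integral_sub ((hχg.const_mul m).fun_add (hχa.const_mul _)) (hχb.const_mul _),
          integral_add (hχg.const_mul m) (hχa.const_mul _), integral_const_mul,
          integral_const_mul, integral_const_mul]
    _ = 0 := by linear_combination hvar

end ConformalEnergy

section EuclideanSpace

variable {n : ℕ}

theorem lapl_eq_laplacian (f : EuclideanSpace ℝ (Fin n) → ℝ) : lapl f = Δ f := by
  ext x
  simp [lapl, InnerProductSpace.laplacian_eq_iteratedFDeriv_orthonormalBasis f
    (EuclideanSpace.basisFun (Fin n) ℝ)]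

theorem gnsQv_eq_conformalEnergy (m k : ℝ) (v w : EuclideanSpace ℝ (Fin n) → ℝ) :
    gnsQv n m k v w =
      conformalEnergy volume m ((m + n - 2) / (4 * (m + n - 1))) v w *
        (∫ x, w x ^ (2 * (m + n - k) / (m + n - 2)) * v x ^ (m - k)) ^ (2 * m / (n * k)) /
        (∫ x, w x ^ (2 * (m + n) / (m + n - 2)) * v x ^ m) ^
          ((2 * m + k * (n - 2)) / (n * k)) := by
  simp only [gnsQv, conformalEnergy, weightedScalarCurvature, lapl_eq_laplacian]

end EuclideanSpace

theorem gns_measure_critical_general (n : ℕ) (_hn : n ≠ 0) (m k : ℝ) (hm : m ≠ 0) (_hk : k ≠ 0)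
    (hmn : m + n - 1 ≠ 0) (w : EuclideanSpace ℝ (Fin n) → ℝ) (hw : ContDiff ℝ 2 w)
    (hpos : ∀ x, 0 < w x) (hFint : Integrable (fun x => ‖gradient w x‖ ^ 2))
    (hAint : Integrable (fun x => w x ^ (2 * (m + n - k) / (m + n - 2))))
    (hBint : Integrable (fun x => w x ^ (2 * (m + n) / (m + n - 2))))
    (hcrit : ∀ χ : EuclideanSpace ℝ (Fin n) → ℝ, ContDiff ℝ ∞ χ → HasCompactSupport χ →
      HasDerivAt (fun t : ℝ => gnsQv n m k (fun x => 1 + t * χ x) w) 0 0)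
    (x : EuclideanSpace ℝ (Fin n)) :
    ‖gradient w x‖ ^ 2 - (m + n - 2) / (2 * (m + n - 1)) * lapl (fun y => w y ^ 2) x
        + 2 * (m - k) / (n * k) * (gnsF n w / gnsA n m k w) *
          w x ^ (2 * (m + n - k) / (m + n - 2))
      = (2 * m + k * (n - 2)) / (n * k) * (gnsF n w / gnsB n m w) *
          w x ^ (2 * (m + n) / (m + n - 2)) := by
  have hcont (p : ℝ) : Continuous fun x => w x ^ p :=
    hw.continuous.rpow_const fun x => .inl (hpos x).ne'
  have hint_pos (p : ℝ) (hint : Integrable fun x => w x ^ p) : 0 < ∫ x, w x ^ p :=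
    integral_pos_of_integrable_nonneg_nonzero (x := 0) (hcont p) hint
      (fun x => (Real.rpow_pos_of_pos (hpos x) p).le) (Real.rpow_pos_of_pos (hpos 0) p).ne'
  simp only [gnsQv_eq_conformalEnergy] at hcrit
  have hEL := conformalEnergy_euler_lagrange hw hFint (hcont _) hAint
    (hint_pos _ hAint) (hcont _) hBint (hint_pos _ hBint) hcrit x
  have hcoeff : (m + n - 2) / (2 * (m + n - 1)) = 2 * ((m + n - 2) / (4 * (m + n - 1))) := by
    field_simp
    ring
  refine mul_left_cancel₀ hm ?_
  rw [hcoeff, lapl_eq_laplacian, gnsF, gnsA, gnsB]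
  linear_combination hEL

/-- the identity satisfied by a critical point of the conformal GNS
functional at `v ≡ 1` for variations of the density `v`. -/
theorem gns_measure_critical (n : ℕ) (hn : 3 ≤ n) (m k : ℝ) (hm : 0 < m)
    (hk : 0 < k) (hk' : k ≤ (m + n + 2) / 2)
    (w : EuclideanSpace ℝ (Fin n) → ℝ)
    (hsmooth : ContDiff ℝ (⊤ : ℕ∞) w) (hpos : ∀ x, 0 < w x)
    (hFint : Integrable (fun x => ‖gradient w x‖ ^ 2))
    (hAint : Integrable (fun x => w x ^ (2 * (m + (n : ℝ) - k) / (m + (n : ℝ) - 2))))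
    (hBint : Integrable (fun x => w x ^ (2 * (m + (n : ℝ)) / (m + (n : ℝ) - 2))))
    (hF : 0 < gnsF n w) (hA : 0 < gnsA n m k w) (hB : 0 < gnsB n m w)
    (hcrit : ∀ χ : EuclideanSpace ℝ (Fin n) → ℝ, ContDiff ℝ (⊤ : ℕ∞) χ → HasCompactSupport χ →
      HasDerivAt (fun t : ℝ => gnsQv n m k (fun x => 1 + t * χ x) w) 0 0) :
    ∀ x, ‖gradient w x‖ ^ 2
        - ((m + n - 2) / (2 * (m + n - 1))) * lapl (fun y => w y ^ 2) x
        + (2 * (m - k) / ((n : ℝ) * k)) * (gnsF n w / gnsA n m k w) *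
          w x ^ (2 * (m + n - k) / (m + (n : ℝ) - 2))
      = ((2 * m + k * ((n : ℝ) - 2)) / ((n : ℝ) * k)) * (gnsF n w / gnsB n m w) *
          w x ^ (2 * (m + n) / (m + (n : ℝ) - 2)) := by
  have hn' : (3 : ℝ) ≤ n := by exact_mod_cast hn
  exact gns_measure_critical_general n (by lia) m k hm.ne' hk.ne' (by linarith) w
    (contDiff_infty.1 hsmooth 2) hpos hFint hAint hBint hcrit
end
end

section
/- Let n ≥ 3 be an integer, m > 0, and k ∈ (0, (m+n+2)/2]. Let w: ℝⁿ → (0,∞) be smooth with F = ∫ |∇w|², A = ∫ w^{2(m+n−k)/(m+n−2)}, B = ∫ w^{2(m+n)/(m+n−2)}, and ∫ w² all finite, and F, A, B positive. Suppose w satisfies both Euler–Lagrange identities: (i) −Δw + [2m(m+n−k)/(nk(m+n−2))]·(F/A)·w^{(m+n+2−2k)/(m+n−2)} = [(m+n)(2m+k(n−2))/(nk(m+n−2))]·(F/B)·w^{(m+n+2)/(m+n−2)} on ℝⁿ, and (ii) |∇w|² − ((m+n−2)/(2(m+n−1)))·Δ(w²) + [2(m−k)/(nk)]·(F/A)·w^{2(m+n−k)/(m+n−2)}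 = [(2m+k(n−2))/(nk)]·(F/B)·w^{2(m+n)/(m+n−2)} on ℝⁿ. Then k = 1, and the function u = w^{−2/(m+n−2)} is a quadratic polynomial: there exist α > 0, b ∈ ℝⁿ, and γ ∈ ℝ with 4αγ > |b|² such that u(x) = α|x|² + ⟨b, x⟩ + γ for all x; in particular Hess u = (Δu/n)·Id with Δu constant. -/
/-!
Put `u = w ^ (-2 / (m + n - 2))`. Eliminating between the two Euler–Lagrange identities expresses
both `|∇u|²` and `Δu` through `u` alone: with positive constants `c` and `q`,
`|∇u|² = 2(m + k(n-1)) c u^k - (2m + k(n-2)) q` and `Δu = nk(m+n-1) c u^(k-1)`.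
Differentiating the first equation makes `∇u` an eigenvector of `Hess u`, and Bochner's formula
gives `|Hess u|²` as a function of `u`. The Cauchy–Schwarz gap `n|Hess u|² - (Δu)²` carries the
factor `k - 1`, and its sign at almost critical points of `u` excludes `k < 1`. The analogous gap
on the orthogonal complement of `∇u` also carries the factor `k - 1`; since `u` is unbounded, its
sign where `u` is large excludes `k > 1`, once `k ≤ 2` is known. For `k = 1` the gap vanishes, so
`Hess u` is a constant multiple of the identity and `u` is a quadratic polynomial.
-/

open MeasureTheory
open scoped RealInnerProductSpace

noncomputable section

/-- The `(i,j)` entry of the Euclidean Hessian matrix of `f` at `x`. -/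
def hess {n : ℕ} (f : EuclideanSpace ℝ (Fin n) → ℝ) (x : EuclideanSpace ℝ (Fin n))
    (i j : Fin n) : ℝ :=
  iteratedFDeriv ℝ 2 f x ![EuclideanSpace.single i 1, EuclideanSpace.single j 1]

section Gradient

variable {E : Type*} [NormedAddCommGroup E] [InnerProductSpace ℝ E]

lemma hasGradientAt_comp [CompleteSpace E] {f : E → ℝ} {x : E} {Φ : ℝ → ℝ} {Φ' : ℝ}
    (hΦ : HasDerivAt Φ Φ' (f x)) (hf : DifferentiableAt ℝ f x) :
    HasGradientAt (fun y => Φ (f y)) (Φ' • gradient f x) x := by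
  rw [hasGradientAt_iff_hasFDerivAt, map_smul, toDual_gradient]
  exact hΦ.comp_hasFDerivAt x hf.hasFDerivAt

lemma norm_gradient_comp_sq [CompleteSpace E] {f : E → ℝ} {x : E} {Φ : ℝ → ℝ} {Φ' : ℝ}
    (hΦ : HasDerivAt Φ Φ' (f x)) (hf : DifferentiableAt ℝ f x) :
    ‖gradient (fun y => Φ (f y)) x‖ ^ 2 = Φ' ^ 2 * ‖gradient f x‖ ^ 2 := by
  rw [(hasGradientAt_comp hΦ hf).gradient, norm_smul, mul_pow, Real.norm_eq_abs, sq_abs]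

lemma norm_gradient_rpow_sq [CompleteSpace E] {f : E → ℝ} {x : E} {p : ℝ}
    (hf : DifferentiableAt ℝ f x) (hx : f x ≠ 0) :
    ‖gradient (fun y => f y ^ p) x‖ ^ 2 = (p * f x ^ (p - 1)) ^ 2 * ‖gradient f x‖ ^ 2 :=
  norm_gradient_comp_sq (Real.hasDerivAt_rpow_const (Or.inl hx)) hf

-- Minimize `f + η‖· - x₀‖²`: the gradient at the minimum is `-2η(y - x₀)`, and comparison with
-- the value at `x₀` bounds `η‖y - x₀‖²`.
lemma exists_le_norm_gradient_sq_lt [ProperSpace E] {f : E → ℝ} (hf : Differentiable ℝ f)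
    (hbdd : BddBelow (Set.range f)) (x₀ : E) {ε : ℝ} (hε : 0 < ε) :
    ∃ y, f y ≤ f x₀ ∧ ‖gradient f y‖ ^ 2 < ε := by
  obtain ⟨B, hB⟩ := hbdd
  have hB : ∀ y, B ≤ f y := fun y => hB ⟨y, rfl⟩
  set K := f x₀ - B + 1
  have hK : 0 < K := by linarith [hB x₀]
  set η := ε / (4 * K)
  have hη : 0 < η := by positivity
  have hg : ∀ y, HasFDerivAt (fun y => f y + η * ‖y - x₀‖ ^ 2)
      (fderiv ℝ f y + η • 2 • innerSL ℝ (y - x₀)) y := fun y =>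
    (hf y).hasFDerivAt.fun_add
      ((((hasFDerivAt_id y).sub_const x₀).norm_sq).const_mul η)
  have hcoercive : Filter.Tendsto (fun y => f y + η * ‖y - x₀‖ ^ 2)
      (Filter.cocompact E) Filter.atTop := by
    refine Filter.tendsto_atTop_add_left_of_le _ B hB (Filter.Tendsto.const_mul_atTop hη ?_)
    simp_rw [← dist_eq_norm]
    exact (Filter.tendsto_pow_atTop two_ne_zero).comp (tendsto_dist_right_cocompact_atTop x₀)
  obtain ⟨y, hy⟩ := Continuous.exists_forall_le
    (continuous_iff_continuousAt.2 fun y => (hg y).continuousAt) hcoercive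
  have hgrad : gradient f y = -(2 * η) • (y - x₀) := by
    have h := (show IsLocalMin _ y from .of_forall hy).hasFDerivAt_eq_zero (hg y)
    apply (InnerProductSpace.toDual ℝ E).injective
    rw [toDual_gradient, eq_neg_of_add_eq_zero_left h]
    ext z
    simp
    ring
  have hx₀ := hy x₀
  rw [sub_self, norm_zero, zero_pow two_ne_zero, mul_zero, add_zero] at hx₀
  refine ⟨y, by nlinarith [sq_nonneg ‖y - x₀‖], ?_⟩
  calc ‖gradient f y‖ ^ 2 = 4 * η * (η * ‖y - x₀‖ ^ 2) := by
        rw [hgrad, norm_smul, mul_pow, Real.norm_eq_abs, sq_abs]; ring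
    _ < 4 * η * K := by gcongr; linarith [hB y]
    _ = ε := by simp only [η]; field_simp

lemma exists_ge_norm_gradient_sq_lt [ProperSpace E] {f : E → ℝ} (hf : Differentiable ℝ f)
    (hbdd : BddAbove (Set.range f)) (x₀ : E) {ε : ℝ} (hε : 0 < ε) :
    ∃ y, f x₀ ≤ f y ∧ ‖gradient f y‖ ^ 2 < ε := by
  obtain ⟨B, hB⟩ := hbdd
  obtain ⟨y, hy, hlt⟩ := exists_le_norm_gradient_sq_lt (f := fun x => -f x) hf.fun_neg
    ⟨-B, by rintro _ ⟨y, rfl⟩; exact neg_le_neg (hB ⟨y, rfl⟩)⟩ x₀ hε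
  rw [norm_gradient_comp_sq (hasDerivAt_neg _) (hf y)] at hlt
  exact ⟨y, neg_le_neg_iff.1 hy, by linarith⟩

lemma eq_quadratic_of_hasGradientAt [CompleteSpace E] {f : E → ℝ} {c : ℝ} {b : E}
    (hf : ∀ x, HasGradientAt f (c • x + b) x) (x : E) :
    f x = c / 2 * ‖x‖ ^ 2 + ⟪b, x⟫ + f 0 := by
  have hg : ∀ y, HasFDerivAt (fun y => f y - (c / 2 * ‖y‖ ^ 2 + ⟪b, y⟫)) (0 : E →L[ℝ] ℝ) y := by
    intro y
    have hquad := ((hasStrictFDerivAt_norm_sq y).hasFDerivAt.const_mul (c / 2)).fun_add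
      (innerSL ℝ b).hasFDerivAt
    refine ((hf y).hasFDerivAt.fun_sub hquad).congr_fderiv ?_
    ext z
    simp
    ring
  have h := is_const_of_fderiv_eq_zero (fun y => (hg y).differentiableAt)
    (fun y => (hg y).fderiv) x 0
  simp only [norm_zero, inner_zero_right] at h
  linarith

lemma norm_sq_lt_of_quadratic_pos {α γ : ℝ} {b : E} (hα : 0 < α)
    (h : ∀ x : E, 0 < α * ‖x‖ ^ 2 + ⟪b, x⟫ + γ) : ‖b‖ ^ 2 < 4 * α * γ := by
  have hvertex := h ((-(2 * α)⁻¹) • b)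
  rw [norm_smul, inner_smul_right, real_inner_self_eq_norm_sq, mul_pow, Real.norm_eq_abs,
    sq_abs] at hvertex
  field_simp at hvertex
  linarith

end Gradient

section Coordinates

variable {n : ℕ} {f : EuclideanSpace ℝ (Fin n) → ℝ} {x : EuclideanSpace ℝ (Fin n)}

lemma gradient_apply (f : EuclideanSpace ℝ (Fin n) → ℝ) (x : EuclideanSpace ℝ (Fin n))
    (i : Fin n) : gradient f x i = fderiv ℝ f x (EuclideanSpace.single i 1) := by
  rw [← inner_gradient_left, EuclideanSpace.inner_single_right]
  simp

lemma contDiff_gradient_apply {r : WithTop ℕ∞} (hf : ContDiff ℝ (r + 1) f) (i : Fin n) :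
    ContDiff ℝ r fun y => gradient f y i := by
  simp_rw [gradient_apply]
  exact (hf.fderiv_right le_rfl).clm_apply contDiff_const

lemma gradient_sum_apply {ι : Type*} {s : Finset ι} {g : ι → EuclideanSpace ℝ (Fin n) → ℝ}
    (hg : ∀ j ∈ s, DifferentiableAt ℝ (g j) x) (i : Fin n) :
    gradient (fun y => ∑ j ∈ s, g j y) x i = ∑ j ∈ s, gradient (g j) x i := by
  simp_rw [gradient_apply, fderiv_fun_sum hg, sum_apply]

lemma hess_eq_fderiv_fderiv (f : EuclideanSpace ℝ (Fin n) → ℝ) (x : EuclideanSpace ℝ (Fin n))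
    (i j : Fin n) : hess f x i j =
      fderiv ℝ (fderiv ℝ f) x (EuclideanSpace.single i 1) (EuclideanSpace.single j 1) :=
  iteratedFDeriv_two_apply f x _

lemma lapl_eq_sum_hess (f : EuclideanSpace ℝ (Fin n) → ℝ) (x : EuclideanSpace ℝ (Fin n)) :
    lapl f x = ∑ i, hess f x i i :=
  rfl

lemma hess_eq_gradient (hf : ContDiff ℝ 2 f) (i j : Fin n) :
    hess f x i j = gradient (fun y => gradient f y j) x i := by
  have hf' : Differentiable ℝ (fderiv ℝ f) :=
    (hf.fderiv_right (m := 1) le_rfl).differentiable one_ne_zero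
  simp_rw [hess_eq_fderiv_fderiv, gradient_apply, fderiv_clm_apply (hf' x)
    (differentiableAt_const _)]
  simp

lemma eq_quadratic_of_hess_eq {c : ℝ} (hf : ContDiff ℝ 2 f)
    (hc : ∀ y i j, hess f y i j = c * if i = j then 1 else 0) (x : EuclideanSpace ℝ (Fin n)) :
    f x = c / 2 * ‖x‖ ^ 2 + ⟪gradient f 0, x⟫ + f 0 := by
  have hgrad_grad : ∀ j y, HasGradientAt (fun z => gradient f z j)
      ((0 : ℝ) • y + c • EuclideanSpace.single j 1) y := fun j y => by
    convert ((contDiff_gradient_apply (r := 1) hf j).differentiable one_ne_zero y).hasGradientAt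
    ext i
    rw [← hess_eq_gradient hf, hc]
    simp [eq_comm]
  have hgrad : ∀ y, gradient f y = c • y + gradient f 0 := fun y => PiLp.ext fun j => by
    rw [eq_quadratic_of_hasGradientAt (hgrad_grad j) y]
    simp [real_inner_smul_left, EuclideanSpace.inner_single_left]
  refine eq_quadratic_of_hasGradientAt (fun y => ?_) x
  rw [← hgrad]
  exact (hf.differentiable two_ne_zero y).hasGradientAt

lemma hess_comm (hf : ContDiff ℝ 2 f) (i j : Fin n) : hess f x i j = hess f x j i := by
  simp_rw [hess_eq_fderiv_fderiv]
  exact hf.contDiffAt.isSymmSndFDerivAt (by simp) _ _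

lemma hess_comp {Φ Φ' : ℝ → ℝ} {Φ'' : ℝ} (hf : ContDiff ℝ 2 f)
    (hΦ : ∀ y, HasDerivAt Φ (Φ' (f y)) (f y)) (hΦ' : HasDerivAt Φ' Φ'' (f x)) (i j : Fin n) :
    hess (fun y => Φ (f y)) x i j
      = Φ' (f x) * hess f x i j + Φ'' * gradient f x i * gradient f x j := by
  have hd : Differentiable ℝ f := hf.differentiable two_ne_zero
  have hf' : Differentiable ℝ (fderiv ℝ f) :=
    (hf.fderiv_right (m := 1) le_rfl).differentiable one_ne_zero
  have h : fderiv ℝ (fun y => Φ (f y)) = fun y => Φ' (f y) • fderiv ℝ f y :=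
    funext fun y => ((hΦ y).comp_hasFDerivAt y (hd y).hasFDerivAt).fderiv
  have h' := (hΦ'.comp_hasFDerivAt x (hd x).hasFDerivAt).fun_smul (hf' x).hasFDerivAt
  simp only [Function.comp_apply] at h'
  rw [hess_eq_fderiv_fderiv, h, h'.fderiv, hess_eq_fderiv_fderiv, gradient_apply, gradient_apply]
  simp

lemma lapl_comp {Φ Φ' : ℝ → ℝ} {Φ'' : ℝ} (hf : ContDiff ℝ 2 f)
    (hΦ : ∀ y, HasDerivAt Φ (Φ' (f y)) (f y)) (hΦ' : HasDerivAt Φ' Φ'' (f x)) :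
    lapl (fun y => Φ (f y)) x = Φ' (f x) * lapl f x + Φ'' * ‖gradient f x‖ ^ 2 := by
  simp_rw [lapl_eq_sum_hess, hess_comp hf hΦ hΦ', EuclideanSpace.real_norm_sq_eq,
    Finset.sum_add_distrib, Finset.mul_sum, sq, mul_assoc]

lemma lapl_sq (hf : ContDiff ℝ 2 f) :
    lapl (fun y => f y ^ 2) x = 2 * (f x * lapl f x + ‖gradient f x‖ ^ 2) := by
  rw [lapl_comp (Φ := fun t => t ^ 2) (Φ' := fun t => 2 * t) (Φ'' := 2) hf
    (fun y => by simpa using hasDerivAt_pow 2 (f y))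
    (by simpa using (hasDerivAt_id (f x)).const_mul 2)]
  ring

lemma lapl_rpow {p : ℝ} (hf : ContDiff ℝ 2 f) (hne : ∀ y, f y ≠ 0) :
    lapl (fun y => f y ^ p) x
      = p * f x ^ (p - 1) * lapl f x + p * ((p - 1) * f x ^ (p - 1 - 1)) * ‖gradient f x‖ ^ 2 := by
  have h : ∀ q y, HasDerivAt (fun t => t ^ q) (q * f y ^ (q - 1)) (f y) := fun q y =>
    Real.hasDerivAt_rpow_const (Or.inl (hne y))
  exact lapl_comp (Φ := fun t => t ^ p) (Φ' := fun t => p * t ^ (p - 1)) hf (h p)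
    ((h (p - 1) x).const_mul p)

lemma lapl_sum {ι : Type*} {s : Finset ι} {g : ι → EuclideanSpace ℝ (Fin n) → ℝ}
    (hg : ∀ j ∈ s, ContDiff ℝ 2 (g j)) :
    lapl (fun y => ∑ j ∈ s, g j y) x = ∑ j ∈ s, lapl (g j) x := by
  simp_rw [lapl, iteratedFDeriv_fun_sum_apply fun j hj => (hg j hj).contDiffAt,
    sum_apply]
  exact Finset.sum_comm

lemma exists_gradient_ne_zero (hf : ContDiff ℝ 2 f) (hx : lapl f x ≠ 0) :
    ∃ y, gradient f y ≠ 0 := by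
  contrapose! hx
  simp [lapl_eq_sum_hess, hess_eq_gradient hf, hx]

lemma lapl_gradient_apply (hf : ContDiff ℝ 3 f) (j : Fin n) :
    lapl (fun y => gradient f y j) x = gradient (lapl f) x j := by
  have hf₂ : ContDiff ℝ 2 f := hf.of_le (by norm_num)
  have hgrad : ∀ i, ContDiff ℝ 2 fun y => gradient f y i := contDiff_gradient_apply hf
  have hhess : ∀ i, Differentiable ℝ fun y => hess f y i i := fun i => by
    simp_rw [hess_eq_gradient hf₂]
    exact (contDiff_gradient_apply (r := 1) (hgrad i) i).differentiable one_ne_zero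
  calc lapl (fun y => gradient f y j) x = ∑ i, hess (fun y => gradient f y j) x i i := rfl
    _ = ∑ i, gradient (fun y => hess f y i j) x i := by
        simp_rw [hess_eq_gradient (hgrad j), hess_eq_gradient hf₂]
    _ = ∑ i, hess (fun y => gradient f y i) x i j := by
        simp_rw [hess_comm hf₂ _ j, hess_eq_gradient (hgrad _), hess_eq_gradient hf₂]
    _ = ∑ i, gradient (fun y => hess f y i i) x j := by
        simp_rw [hess_comm (hgrad _) _ j, hess_eq_gradient (hgrad _), hess_eq_gradient hf₂]
    _ = gradient (lapl f) x j := (gradient_sum_apply (fun i _ => hhess i x) j).symm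

lemma gradient_norm_gradient_sq_apply (hf : ContDiff ℝ 2 f) (i : Fin n) :
    gradient (fun y => ‖gradient f y‖ ^ 2) x i = 2 * ∑ j, hess f x i j * gradient f x j := by
  have hgrad : ∀ j, Differentiable ℝ fun y => gradient f y j := fun j =>
    (contDiff_gradient_apply (r := 1) hf j).differentiable one_ne_zero
  simp_rw [EuclideanSpace.real_norm_sq_eq]
  rw [gradient_sum_apply fun j _ => (hgrad j x).fun_pow 2, Finset.mul_sum]
  refine Finset.sum_congr rfl fun j _ => ?_
  rw [(hasGradientAt_comp (hasDerivAt_pow 2 _) (hgrad j x)).gradient, hess_eq_gradient hf]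
  simp
  ring

/-- **Bochner's formula** on `ℝⁿ`. -/
lemma lapl_norm_gradient_sq (hf : ContDiff ℝ 3 f) :
    lapl (fun y => ‖gradient f y‖ ^ 2) x
      = 2 * (∑ i, ∑ j, hess f x i j ^ 2 + ⟪gradient f x, gradient (lapl f) x⟫) := by
  have hgrad : ∀ j, ContDiff ℝ 2 fun y => gradient f y j := contDiff_gradient_apply hf
  have hhess : ∀ j, ‖gradient (fun y => gradient f y j) x‖ ^ 2 = ∑ i, hess f x i j ^ 2 :=
    fun j => by
      simp_rw [EuclideanSpace.real_norm_sq_eq, hess_eq_gradient (hf.of_le (by norm_num))]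
  simp_rw [EuclideanSpace.real_norm_sq_eq]
  rw [lapl_sum fun j _ => (hgrad j).pow 2]
  simp_rw [lapl_sq (hgrad _), lapl_gradient_apply hf, hhess]
  rw [← Finset.mul_sum, Finset.sum_add_distrib, Finset.sum_comm (γ := Fin n), add_comm]
  simp only [PiLp.inner_apply, Real.inner_apply]

end Coordinates

section Hessian

variable {ι : Type*} [Fintype ι]

lemma sum_sq_sub_scalar [DecidableEq ι] (H : ι → ι → ℝ) (t : ℝ) :
    ∑ i, ∑ j, (H i j - t * if i = j then 1 else 0) ^ 2
      = ∑ i, ∑ j, H i j ^ 2 - 2 * t * ∑ i, H i i + Fintype.card ι * t ^ 2 := by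
  have h : ∀ i j, (H i j - t * if i = j then 1 else 0) ^ 2
      = H i j ^ 2 + if i = j then t ^ 2 - 2 * t * H i j else 0 := by
    intro i j
    split_ifs <;> ring
  simp only [h, Finset.sum_add_distrib, Finset.sum_ite_eq, Finset.mem_univ, if_true,
    Finset.sum_sub_distrib, ← Finset.mul_sum, Finset.sum_const, Finset.card_univ, nsmul_eq_mul]
  ring

lemma sq_trace_le_card_mul_sum_sq (H : ι → ι → ℝ) :
    (∑ i, H i i) ^ 2 ≤ Fintype.card ι * ∑ i, ∑ j, H i j ^ 2 := by
  calc (∑ i, H i i) ^ 2 ≤ Fintype.card ι * ∑ i, H i i ^ 2 := sq_sum_le_card_mul_sum_sq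
    _ ≤ Fintype.card ι * ∑ i, ∑ j, H i j ^ 2 := by
      gcongr with i
      exact Finset.single_le_sum (f := fun j => H i j ^ 2) (fun j _ => sq_nonneg _)
        (Finset.mem_univ i)

lemma eq_scalar_of_card_mul_sum_sq_eq [DecidableEq ι] {H : ι → ι → ℝ}
    (hH : Fintype.card ι * ∑ i, ∑ j, H i j ^ 2 = (∑ i, H i i) ^ 2) (i j : ι) :
    H i j = (∑ i, H i i) / Fintype.card ι * if i = j then 1 else 0 := by
  have hcard : (Fintype.card ι : ℝ) ≠ 0 := Nat.cast_ne_zero.2 (Fintype.card_pos_iff.2 ⟨i⟩).ne'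
  have h : ∑ i, ∑ j, (H i j - (∑ i, H i i) / Fintype.card ι * if i = j then 1 else 0) ^ 2 = 0 := by
    rw [sum_sq_sub_scalar]
    field_simp
    linear_combination hH
  rw [Fintype.sum_eq_zero_iff_of_nonneg fun i => Finset.sum_nonneg fun j _ => sq_nonneg _] at h
  have hi := congrFun h i
  rw [Pi.zero_apply, Finset.sum_eq_zero_iff_of_nonneg fun j _ => sq_nonneg _] at hi
  exact sub_eq_zero.1 (pow_eq_zero_iff two_ne_zero |>.1 (hi j (Finset.mem_univ j)))

lemma sq_eigenvalue_le_sum_sq {H : ι → ι → ℝ} {v : ι → ℝ} {l : ℝ} (hv : v ≠ 0)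
    (hH : ∀ i, ∑ j, H i j * v j = l * v i) : l ^ 2 ≤ ∑ i, ∑ j, H i j ^ 2 := by
  have hpos : 0 < ∑ i, v i ^ 2 := by
    obtain ⟨i, hi⟩ := Function.ne_iff.1 hv
    exact Finset.sum_pos' (fun i _ => sq_nonneg _) ⟨i, Finset.mem_univ i, sq_pos_of_ne_zero hi⟩
  refine le_of_mul_le_mul_right ?_ hpos
  calc l ^ 2 * ∑ i, v i ^ 2 = ∑ i, (∑ j, H i j * v j) ^ 2 := by
        simp_rw [hH, mul_pow, Finset.mul_sum]
    _ ≤ ∑ i, (∑ j, H i j ^ 2) * ∑ j, v j ^ 2 :=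
        Finset.sum_le_sum fun i _ => Finset.sum_mul_sq_le_sq_mul_sq _ _ _
    _ = (∑ i, ∑ j, H i j ^ 2) * ∑ i, v i ^ 2 := (Finset.sum_mul ..).symm

-- The bound on the eigenvalue `l - t` of `H - t • 1` is a quadratic inequality in `t`.
lemma sq_trace_sub_eigenvalue_le {H : ι → ι → ℝ} {v : ι → ℝ} {l : ℝ} (hv : v ≠ 0)
    (hH : ∀ i, ∑ j, H i j * v j = l * v i) :
    (∑ i, H i i - l) ^ 2 ≤ (Fintype.card ι - 1) * (∑ i, ∑ j, H i j ^ 2 - l ^ 2) := by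
  classical
  have hshift : ∀ t : ℝ, (l - t) ^ 2 ≤ ∑ i, ∑ j, (H i j - t * if i = j then 1 else 0) ^ 2 :=
    fun t => sq_eigenvalue_le_sum_sq hv fun i => by
      simp [sub_mul, Finset.sum_sub_distrib, hH]
  have hdiscrim := discrim_le_zero (a := (Fintype.card ι : ℝ) - 1) (b := -2 * (∑ i, H i i - l))
    (c := ∑ i, ∑ j, H i j ^ 2 - l ^ 2) fun t => by
      have := hshift t
      rw [sum_sq_sub_scalar] at this
      linarith
  rw [discrim] at hdiscrim
  linarith

end Hessian

/-- An isoparametric function: `|∇u|²` and `Δu` are functions `Φ` and `Ψ` of `u` itself. -/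
structure IsIsoparametric {n : ℕ} (u : EuclideanSpace ℝ (Fin n) → ℝ) (Φ Ψ : ℝ → ℝ) : Prop where
  norm_gradient_sq : ∀ x, ‖gradient u x‖ ^ 2 = Φ (u x)
  lapl_eq : ∀ x, lapl u x = Ψ (u x)

namespace IsIsoparametric

variable {n : ℕ} {u : EuclideanSpace ℝ (Fin n) → ℝ} {Φ Ψ Φ' : ℝ → ℝ} {Φ'' Ψ' d : ℝ}
  {x : EuclideanSpace ℝ (Fin n)}

lemma sum_hess_mul_gradient (hiso : IsIsoparametric u Φ Ψ) (hu : ContDiff ℝ 2 u)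
    (hΦ : HasDerivAt Φ d (u x)) (i : Fin n) :
    ∑ j, hess u x i j * gradient u x j = d / 2 * gradient u x i := by
  have h := gradient_norm_gradient_sq_apply hu (x := x) i
  rw [funext hiso.norm_gradient_sq,
    (hasGradientAt_comp hΦ (hu.differentiable two_ne_zero x)).gradient,
    PiLp.smul_apply, smul_eq_mul] at h
  linarith

lemma sum_hess_sq (hiso : IsIsoparametric u Φ Ψ) (hu : ContDiff ℝ 3 u)
    (hΦ : ∀ y, HasDerivAt Φ (Φ' (u y)) (u y)) (hΦ' : HasDerivAt Φ' Φ'' (u x))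
    (hΨ : HasDerivAt Ψ Ψ' (u x)) :
    ∑ i, ∑ j, hess u x i j ^ 2 = Φ' (u x) / 2 * Ψ (u x) + (Φ'' / 2 - Ψ') * Φ (u x) := by
  have hbochner := lapl_norm_gradient_sq hu (x := x)
  rw [funext hiso.norm_gradient_sq, lapl_comp (hu.of_le (by norm_num)) hΦ hΦ',
    funext hiso.lapl_eq,
    (hasGradientAt_comp hΨ (hu.differentiable three_ne_zero x)).gradient, real_inner_smul_right,
    real_inner_self_eq_norm_sq, hiso.norm_gradient_sq] at hbochner
  linarith

lemma not_bddAbove_range (hiso : IsIsoparametric u Φ Ψ) (hu : Differentiable ℝ u)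
    (hΦ : MonotoneOn Φ (Set.range u)) (hx : gradient u x ≠ 0) : ¬BddAbove (Set.range u) := by
  intro hbdd
  obtain ⟨y, hy, hlt⟩ := exists_ge_norm_gradient_sq_lt hu hbdd x (ε := ‖gradient u x‖ ^ 2)
    (by positivity)
  rw [hiso.norm_gradient_sq, hiso.norm_gradient_sq] at hlt
  exact hlt.not_ge (hΦ ⟨x, rfl⟩ ⟨y, rfl⟩ hy)

end IsIsoparametric

/-- A positive solution of the system that the two Euler–Lagrange identities become for the
conformal factor `u = w^{-2/(m+n-2)}`. The constants are `c = 4(F/A)/(nk(m+n-2)²)` and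
`q = 4(F/B)/(nk(m+n-2)²)`. -/
structure IsGNSFactor {n : ℕ} (m k c q : ℝ) (u : EuclideanSpace ℝ (Fin n) → ℝ) : Prop where
  contDiff : ContDiff ℝ 3 u
  pos : ∀ x, 0 < u x
  isIsoparametric : IsIsoparametric u
    (fun t => 2 * (m + k * (n - 1)) * c * t ^ k - (2 * m + k * (n - 2)) * q)
    (fun t => n * k * (m + n - 1) * c * t ^ (k - 1))

namespace IsGNSFactor

section Identities

variable {n : ℕ} {m k c q : ℝ} {u : EuclideanSpace ℝ (Fin n) → ℝ}

lemma norm_gradient_sq (hu : IsGNSFactor m k c q u) (x : EuclideanSpace ℝ (Fin n)) :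
    ‖gradient u x‖ ^ 2 = 2 * (m + k * (n - 1)) * c * u x ^ k - (2 * m + k * (n - 2)) * q :=
  hu.isIsoparametric.norm_gradient_sq x

lemma lapl_eq (hu : IsGNSFactor m k c q u) (x : EuclideanSpace ℝ (Fin n)) :
    lapl u x = n * k * (m + n - 1) * c * (u x ^ k / u x) := by
  rw [hu.isIsoparametric.lapl_eq, Real.rpow_sub_one (hu.pos x).ne']

lemma hasDerivAt_rpow (hu : IsGNSFactor m k c q u) (p : ℝ) (x : EuclideanSpace ℝ (Fin n)) :
    HasDerivAt (fun t => t ^ p) (p * u x ^ (p - 1)) (u x) :=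
  Real.hasDerivAt_rpow_const (Or.inl (hu.pos x).ne')

lemma sum_hess_mul_gradient (hu : IsGNSFactor m k c q u) (x : EuclideanSpace ℝ (Fin n))
    (i : Fin n) : ∑ j, hess u x i j * gradient u x j
      = k * (m + k * (n - 1)) * c * (u x ^ k / u x) * gradient u x i := by
  rw [hu.isIsoparametric.sum_hess_mul_gradient (hu.contDiff.of_le (by norm_num))
    (((hu.hasDerivAt_rpow k x).const_mul _).sub_const _), Real.rpow_sub_one (hu.pos x).ne']
  ring

lemma sum_hess_sq (hu : IsGNSFactor m k c q u) (x : EuclideanSpace ℝ (Fin n)) :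
    ∑ i, ∑ j, hess u x i j ^ 2
      = k * c * (u x ^ k / u x ^ 2) * (n * k * (m + n - 1) * (m + k * (n - 1)) * c * u x ^ k
        + (k - 1) * (m + k * (n - 1) - n * (m + n - 1)) * ‖gradient u x‖ ^ 2) := by
  rw [hu.isIsoparametric.sum_hess_sq hu.contDiff
    (fun y => ((hu.hasDerivAt_rpow k y).const_mul _).sub_const _)
    (((hu.hasDerivAt_rpow (k - 1) x).const_mul k).const_mul _)
    ((hu.hasDerivAt_rpow (k - 1) x).const_mul _), hu.norm_gradient_sq]
  have hx := (hu.pos x).ne'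
  simp only [Real.rpow_sub_one hx]
  field_simp

lemma card_mul_sum_hess_sq_sub (hu : IsGNSFactor m k c q u) (x : EuclideanSpace ℝ (Fin n)) :
    n * ∑ i, ∑ j, hess u x i j ^ 2 - lapl u x ^ 2
      = n * (n - 1) * k * c * (u x ^ k / u x ^ 2) * (k - 1)
        * (n * k * (m + n - 1) * c * u x ^ k - (m + n - k) * ‖gradient u x‖ ^ 2) := by
  rw [hu.sum_hess_sq, hu.lapl_eq]
  ring

lemma card_sub_one_mul_sum_hess_sq_sub (hu : IsGNSFactor m k c q u)
    (x : EuclideanSpace ℝ (Fin n)) :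
    (n - 1) * (∑ i, ∑ j, hess u x i j ^ 2 - (k * (m + k * (n - 1)) * c * (u x ^ k / u x)) ^ 2)
        - (lapl u x - k * (m + k * (n - 1)) * c * (u x ^ k / u x)) ^ 2
      = (n - 1) ^ 2 * k * c * (u x ^ k / u x ^ 2) * (k - 1) * (m + n - k)
        * (2 * m + k * (n - 2)) * (q - c * u x ^ k) := by
  rw [hu.sum_hess_sq, hu.lapl_eq, hu.norm_gradient_sq]
  ring

end Identities

section Rigidity

variable {n : ℕ} {m k c q : ℝ} {u : EuclideanSpace ℝ (Fin n) → ℝ}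

lemma exists_gradient_ne_zero (hu : IsGNSFactor m k c q u) (hn : 2 ≤ n) (hm : 0 < m) (hk : 0 < k)
    (hc : 0 < c) : ∃ x, gradient u x ≠ 0 := by
  have hn' : (2 : ℝ) ≤ n := by exact_mod_cast hn
  have hN : 0 < m + n - 1 := by linarith
  refine _root_.exists_gradient_ne_zero (x := 0) (hu.contDiff.of_le (by norm_num)) ?_
  rw [hu.lapl_eq]
  have := hu.pos 0
  positivity

-- At an almost critical point `c u^k` is bounded below, while `n|Hess u|² ≥ (Δu)²` bounds it by a
-- multiple of `|∇u|²`.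
lemma one_le (hu : IsGNSFactor m k c q u) (hn : 2 ≤ n) (hm : 0 < m) (hk : 0 < k) (hc : 0 < c)
    (hq : 0 < q) : 1 ≤ k := by
  by_contra! hlt
  have hn' : (2 : ℝ) ≤ n := by exact_mod_cast hn
  have hnk : 0 < k * (n - 1) := by nlinarith
  have hN : 0 < m + n - 1 := by linarith
  have hNk : 0 < m + n - k := by linarith
  have : 0 < 2 * m + k * (n - 2) := by nlinarith
  set ε := n * k * (m + n - 1) * (2 * m + k * (n - 2)) * q
    / (2 * (m + k * (n - 1)) * (m + n - k)) with hε
  obtain ⟨x, -, hx⟩ := exists_le_norm_gradient_sq_lt (hu.contDiff.differentiable three_ne_zero)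
    ⟨0, by rintro _ ⟨y, rfl⟩; exact (hu.pos y).le⟩ 0 (show 0 < ε by positivity)
  have hux := hu.pos x
  have hupper : n * k * (m + n - 1) * c * u x ^ k ≤ (m + n - k) * ‖gradient u x‖ ^ 2 := by
    have htrace := sq_trace_le_card_mul_sum_sq (hess u x)
    rw [← lapl_eq_sum_hess, Fintype.card_fin, ← sub_nonneg, hu.card_mul_sum_hess_sq_sub] at htrace
    have hcoeff : 0 < n * (n - 1) * k * c * (u x ^ k / u x ^ 2) * (1 - k) := by
      have : (0 : ℝ) < n - 1 := by linarith
      have : 0 < 1 - k := by linarith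
      positivity
    nlinarith
  have hlower : (2 * m + k * (n - 2)) * q ≤ 2 * (m + k * (n - 1)) * (c * u x ^ k) := by
    linarith [hu.norm_gradient_sq x, sq_nonneg ‖gradient u x‖]
  rw [hε, lt_div_iff₀ (by positivity)] at hx
  nlinarith [mul_le_mul_of_nonneg_left hlower (show 0 ≤ n * k * (m + n - 1) by positivity)]

lemma norm_gradient_rpow_sq (hu : IsGNSFactor m k c q u) (x : EuclideanSpace ℝ (Fin n)) :
    ‖gradient (fun y => u y ^ (1 - k / 2)) x‖ ^ 2 = (1 - k / 2) ^ 2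
      * (2 * (m + k * (n - 1)) * c - (2 * m + k * (n - 2)) * q / u x ^ k) := by
  have hx := Real.rpow_pos_of_pos (hu.pos x) k
  rw [_root_.norm_gradient_rpow_sq (hu.contDiff.differentiable three_ne_zero x) (hu.pos x).ne',
    hu.norm_gradient_sq, mul_pow, ← Real.rpow_mul_natCast (hu.pos x).le,
    show (1 - k / 2 - 1) * (2 : ℕ) = -k by push_cast; ring, Real.rpow_neg (hu.pos x).le]
  field_simp

-- For `k > 2` the positive function `u ^ (1 - k / 2)` would decrease at a definite rate along its
-- gradient flow.
lemma le_two (hu : IsGNSFactor m k c q u) (hn : 2 ≤ n) (hm : 0 < m) (hk : 0 < k) (hc : 0 < c)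
    (hq : 0 < q) : k ≤ 2 := by
  by_contra! hlt
  have hn' : (2 : ℝ) ≤ n := by exact_mod_cast hn
  have : 0 < 2 * m + k * (n - 2) := by nlinarith
  have hr : 1 - k / 2 < 0 := by linarith
  obtain ⟨x, hx⟩ := hu.exists_gradient_ne_zero hn hm hk hc
  have hdiff : Differentiable ℝ fun y => u y ^ (1 - k / 2) :=
    (hu.contDiff.differentiable three_ne_zero).rpow_const fun y => Or.inl (hu.pos y).ne'
  obtain ⟨y, hy, hgrad⟩ := exists_le_norm_gradient_sq_lt hdiff
    ⟨0, by rintro _ ⟨y, rfl⟩; exact Real.rpow_nonneg (hu.pos y).le _⟩ x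
    (ε := ‖gradient (fun y => u y ^ (1 - k / 2)) x‖ ^ 2) (by
      have hux := hu.pos x
      rw [_root_.norm_gradient_rpow_sq (hu.contDiff.differentiable three_ne_zero x) hux.ne']
      have := hr.ne
      positivity)
  have hxy : u x ^ k ≤ u y ^ k := Real.rpow_le_rpow (hu.pos x).le
    ((Real.rpow_le_rpow_iff_of_neg (hu.pos y) (hu.pos x) hr).1 hy) hk.le
  refine hgrad.not_ge ?_
  rw [hu.norm_gradient_rpow_sq, hu.norm_gradient_rpow_sq]
  have := Real.rpow_pos_of_pos (hu.pos x) k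
  gcongr

lemma not_bddAbove_range (hu : IsGNSFactor m k c q u) (hn : 2 ≤ n) (hm : 0 < m) (hk : 0 < k)
    (hc : 0 < c) : ¬BddAbove (Set.range u) := by
  have hn' : (2 : ℝ) ≤ n := by exact_mod_cast hn
  have hP : 0 ≤ m + k * (n - 1) := by nlinarith
  obtain ⟨x, hx⟩ := hu.exists_gradient_ne_zero hn hm hk hc
  refine hu.isIsoparametric.not_bddAbove_range (hu.contDiff.differentiable three_ne_zero) ?_ hx
  rintro _ ⟨y, rfl⟩ _ ⟨z, rfl⟩ hyz
  have := (hu.pos y).le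
  dsimp only
  gcongr

-- Where `c u^k > q`, the Cauchy–Schwarz inequality on the orthogonal complement of the eigenvector
-- `∇u` of `Hess u` fails unless `k ≤ 1`.
lemma le_one (hu : IsGNSFactor m k c q u) (hn : 2 ≤ n) (hm : 0 < m) (hk : 0 < k) (hc : 0 < c)
    (hq : 0 < q) : k ≤ 1 := by
  by_contra! hlt
  have hn' : (2 : ℝ) ≤ n := by exact_mod_cast hn
  have hNk : 0 < m + n - k := by linarith [hu.le_two hn hm hk hc hq]
  have hD : 0 < 2 * m + k * (n - 2) := by nlinarith
  obtain ⟨_, ⟨x, rfl⟩, hx⟩ := not_bddAbove_iff.1 (hu.not_bddAbove_range hn hm hk hc)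
    ((q / c) ^ k⁻¹)
  have hqx : q < c * u x ^ k := by
    have := Real.rpow_lt_rpow (by positivity) hx hk
    rwa [Real.rpow_inv_rpow (by positivity) hk.ne', div_lt_iff₀' hc] at this
  have hgrad : gradient u x ≠ 0 := by
    intro h
    have := hu.norm_gradient_sq x
    rw [h, norm_zero] at this
    nlinarith [mul_pos hk (show (0 : ℝ) < n by linarith)]
  have htrace := sq_trace_sub_eigenvalue_le
    ((WithLp.ofLp_eq_zero 2 (x := gradient u x)).not.2 hgrad) (hu.sum_hess_mul_gradient x)
  rw [← lapl_eq_sum_hess, Fintype.card_fin, ← sub_nonneg,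
    hu.card_sub_one_mul_sum_hess_sq_sub] at htrace
  have hcoeff : 0 < (n - 1) ^ 2 * k * c * (u x ^ k / u x ^ 2) * (k - 1) * (m + n - k)
      * (2 * m + k * (n - 2)) := by
    have := hu.pos x
    have : (0 : ℝ) < n - 1 := by linarith
    have : 0 < k - 1 := by linarith
    positivity
  exact hqx.not_ge (sub_nonneg.1 (nonneg_of_mul_nonneg_right htrace hcoeff))

lemma eq_one (hu : IsGNSFactor m k c q u) (hn : 2 ≤ n) (hm : 0 < m) (hk : 0 < k) (hc : 0 < c)
    (hq : 0 < q) : k = 1 :=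
  (hu.le_one hn hm hk hc hq).antisymm (hu.one_le hn hm hk hc hq)

end Rigidity

section DelPinoDolbeault

variable {n : ℕ} {m c q : ℝ} {u : EuclideanSpace ℝ (Fin n) → ℝ}

lemma lapl_eq_const (hu : IsGNSFactor m 1 c q u) (x : EuclideanSpace ℝ (Fin n)) :
    lapl u x = n * ((m + n - 1) * c) := by
  rw [hu.lapl_eq, Real.rpow_one, div_self (hu.pos x).ne']
  ring

lemma hess_eq_lapl (hu : IsGNSFactor m 1 c q u) (x : EuclideanSpace ℝ (Fin n)) (i j : Fin n) :
    hess u x i j = lapl u x / n * if i = j then 1 else 0 := by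
  have hgap := hu.card_mul_sum_hess_sq_sub x
  rw [sub_self, mul_zero, zero_mul, sub_eq_zero, lapl_eq_sum_hess] at hgap
  rw [lapl_eq_sum_hess]
  simpa using eq_scalar_of_card_mul_sum_sq_eq (by simpa using hgap) i j

lemma eq_quadratic (hu : IsGNSFactor m 1 c q u) (x : EuclideanSpace ℝ (Fin n)) :
    u x = (m + n - 1) * c / 2 * ‖x‖ ^ 2 + ⟪gradient u 0, x⟫ + u 0 := by
  refine eq_quadratic_of_hess_eq (hu.contDiff.of_le (by norm_num)) (fun y i j => ?_) x
  have : (n : ℝ) ≠ 0 := Nat.cast_ne_zero.2 i.pos.ne'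
  rw [hu.hess_eq_lapl, hu.lapl_eq_const, mul_div_cancel_left₀ _ this]

end DelPinoDolbeault

end IsGNSFactor

lemma rpow_natCast_mul_sub_two_mul_div {W N : ℝ} (hW : 0 < W) (hN : N ≠ 0) (j : ℕ) (s : ℝ) :
    W ^ ((j * N - 2 * s) / N) = W ^ j * (W ^ (-2 / N)) ^ s := by
  rw [← Real.rpow_mul hW.le, ← Real.rpow_natCast, ← Real.rpow_add hW]
  congr 1
  field_simp
  ring

/-- The two Euler–Lagrange identities of the conformal GNS functional at `v ≡ 1`, for variations in
`w` and in the density `v`, with constants `a` and `b` in place of `F/A` and `F/B`. -/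
structure IsDoublyCritical {n : ℕ} (m k a b : ℝ) (w : EuclideanSpace ℝ (Fin n) → ℝ) : Prop where
  eulerLagrange : ∀ x, -lapl w x
        + (2 * m * (m + n - k) / ((n : ℝ) * k * (m + n - 2))) * a *
          w x ^ ((m + n + 2 - 2 * k) / (m + (n : ℝ) - 2))
      = ((m + n) * (2 * m + k * ((n : ℝ) - 2)) / ((n : ℝ) * k * (m + n - 2))) *
          b * w x ^ ((m + (n : ℝ) + 2) / (m + (n : ℝ) - 2))
  eulerLagrange_density : ∀ x, ‖gradient w x‖ ^ 2
        - ((m + n - 2) / (2 * (m + n - 1))) * lapl (fun y => w y ^ 2) x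
        + (2 * (m - k) / ((n : ℝ) * k)) * a *
          w x ^ (2 * (m + n - k) / (m + (n : ℝ) - 2))
      = ((2 * m + k * ((n : ℝ) - 2)) / ((n : ℝ) * k)) * b *
          w x ^ (2 * (m + n) / (m + (n : ℝ) - 2))

namespace IsDoublyCritical

variable {n : ℕ} {m k a b : ℝ} {w : EuclideanSpace ℝ (Fin n) → ℝ} {x : EuclideanSpace ℝ (Fin n)}

lemma lapl_eq (h : IsDoublyCritical m k a b w) (hn : 0 < n) (hk : k ≠ 0) (hN : m + n - 2 ≠ 0)
    (hx : 0 < w x) {U : ℝ} (hU : U = w x ^ (-2 / (m + (n : ℝ) - 2))) :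
    n * k * (m + n - 2) * (U ^ 2 * lapl w x)
      = w x * (2 * m * (m + n - k) * a * U ^ k - (m + n) * (2 * m + k * (n - 2)) * b) := by
  have hn' : (n : ℝ) ≠ 0 := by positivity
  have hU₀ : 0 < U := hU ▸ Real.rpow_pos_of_pos hx _
  have hE := h.eulerLagrange x
  rw [show m + n + 2 - 2 * k = (1 : ℕ) * (m + n - 2) - 2 * (k - 2) by push_cast; ring,
    show m + (n : ℝ) + 2 = (1 : ℕ) * (m + n - 2) - 2 * (0 - 2) by push_cast; ring,
    rpow_natCast_mul_sub_two_mul_div hx hN, rpow_natCast_mul_sub_two_mul_div hx hN, ← hU,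
    Real.rpow_sub hU₀, Real.rpow_sub hU₀, Real.rpow_two, Real.rpow_zero, pow_one] at hE
  field_simp at hE
  linear_combination -hE

lemma norm_gradient_sq_eq (h : IsDoublyCritical m k a b w) (hw : ContDiff ℝ 2 w) (hn : 0 < n)
    (hk : k ≠ 0) (hN : 0 < m + n - 2) (hx : 0 < w x) {U : ℝ}
    (hU : U = w x ^ (-2 / (m + (n : ℝ) - 2))) :
    n * k * (U ^ 2 * ‖gradient w x‖ ^ 2)
      = w x ^ 2 * (2 * (m + k * (n - 1)) * a * U ^ k - (2 * m + k * (n - 2)) * b) := by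
  have hn' : (n : ℝ) ≠ 0 := by positivity
  have hN' : m + n - 1 ≠ 0 := by linarith
  have hU₀ : 0 < U := hU ▸ Real.rpow_pos_of_pos hx _
  have hE := h.eulerLagrange_density x
  rw [lapl_sq hw,
    show 2 * (m + n - k) = (2 : ℕ) * (m + n - 2) - 2 * (k - 2) by push_cast; ring,
    show 2 * (m + (n : ℝ)) = (2 : ℕ) * (m + n - 2) - 2 * (0 - 2) by push_cast; ring,
    rpow_natCast_mul_sub_two_mul_div hx hN.ne', rpow_natCast_mul_sub_two_mul_div hx hN.ne', ← hU,
    Real.rpow_sub hU₀, Real.rpow_sub hU₀, Real.rpow_two, Real.rpow_zero] at hE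
  field_simp at hE
  linear_combination hE + w x * h.lapl_eq hn hk hN.ne' hx hU

lemma isGNSFactor (h : IsDoublyCritical m k a b w) (hw : ContDiff ℝ 3 w) (hpos : ∀ x, 0 < w x)
    (hn : 0 < n) (hk : k ≠ 0) (hN : 0 < m + n - 2) :
    IsGNSFactor m k (4 * a / (n * k * (m + n - 2) ^ 2)) (4 * b / (n * k * (m + n - 2) ^ 2))
      fun x => w x ^ (-2 / (m + (n : ℝ) - 2)) where
  contDiff := hw.rpow_const_of_ne fun x => (hpos x).ne'
  pos x := Real.rpow_pos_of_pos (hpos x) _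
  isIsoparametric :=
    { norm_gradient_sq x := by
        have hn' : (n : ℝ) ≠ 0 := by positivity
        have hx := hpos x
        obtain ⟨U, hU⟩ : ∃ U, U = w x ^ (-2 / (m + (n : ℝ) - 2)) := ⟨_, rfl⟩
        have hG := h.norm_gradient_sq_eq (hw.of_le (by norm_num)) hn hk hN hx hU
        rw [norm_gradient_rpow_sq (hw.differentiable three_ne_zero x) hx.ne',
          Real.rpow_sub_one hx.ne', ← hU]
        field_simp
        linear_combination 4 * hG
      lapl_eq x := by
        have hn' : (n : ℝ) ≠ 0 := by positivity
        have hw₂ : ContDiff ℝ 2 w := hw.of_le (by norm_num)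
        have hx := hpos x
        obtain ⟨U, hU⟩ : ∃ U, U = w x ^ (-2 / (m + (n : ℝ) - 2)) := ⟨_, rfl⟩
        have hU₀ : 0 < U := hU ▸ Real.rpow_pos_of_pos hx _
        have hG := h.norm_gradient_sq_eq hw₂ hn hk hN hx hU
        have hL := h.lapl_eq hn hk hN.ne' hx hU
        simp only [lapl_rpow hw₂ fun y => (hpos y).ne', Real.rpow_sub_one hx.ne', ← hU,
          Real.rpow_sub_one hU₀.ne']
        field_simp
        refine mul_left_cancel₀ (mul_ne_zero hn' hk) ?_
        linear_combination -2 * w x * hL + 2 * (m + n) * hG }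

end IsDoublyCritical

theorem gns_doubly_critical_euclidean_general {n : ℕ} (hn : 2 ≤ n) {m k a b : ℝ} (hm : 0 < m)
    (hk : 0 < k) (ha : 0 < a) (hb : 0 < b) {w : EuclideanSpace ℝ (Fin n) → ℝ}
    (hw : ContDiff ℝ 3 w) (hpos : ∀ x, 0 < w x) (h : IsDoublyCritical m k a b w) :
    k = 1 ∧
      (∃ (α : ℝ) (b : EuclideanSpace ℝ (Fin n)) (γ : ℝ), 0 < α ∧ 4 * α * γ > ‖b‖ ^ 2 ∧
        ∀ x, w x ^ (-2 / (m + (n : ℝ) - 2)) = α * ‖x‖ ^ 2 + ⟪b, x⟫ + γ) ∧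
      (∀ x i j, hess (fun y => w y ^ (-2 / (m + (n : ℝ) - 2))) x i j =
        (lapl (fun y => w y ^ (-2 / (m + (n : ℝ) - 2))) x / n) * (if i = j then 1 else 0)) ∧
      (∃ c : ℝ, ∀ x, lapl (fun y => w y ^ (-2 / (m + (n : ℝ) - 2))) x = c) := by
  have hn' : (2 : ℝ) ≤ n := by exact_mod_cast hn
  have hN : 0 < m + n - 2 := by linarith
  have hN' : 0 < m + n - 1 := by linarith
  have hu := h.isGNSFactor hw hpos (by omega) hk.ne' hN
  obtain rfl := hu.eq_one hn hm hk (by positivity) (by positivity)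
  have hα : 0 < (m + n - 1) * (4 * a / (n * 1 * (m + n - 2) ^ 2)) / 2 := by positivity
  exact ⟨rfl, ⟨_, _, _, hα, norm_sq_lt_of_quadratic_pos hα fun x => hu.eq_quadratic x ▸ hu.pos x,
    hu.eq_quadratic⟩, hu.hess_eq_lapl, _, hu.lapl_eq_const⟩

/-- if `w` satisfies both Euler–Lagrange identities (criticality in
`w` and in the density `v` at `v ≡ 1`), then `k = 1` and `u = w^{-2/(m+n-2)}` is a
positive-definite quadratic polynomial; in particular `Hess u = (Δu/n)·Id` with
`Δu` constant. -/
theorem gns_doubly_critical_euclidean (n : ℕ) (hn : 3 ≤ n) (m k : ℝ) (hm : 0 < m)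
    (hk : 0 < k) (hk' : k ≤ (m + n + 2) / 2)
    (w : EuclideanSpace ℝ (Fin n) → ℝ)
    (hsmooth : ContDiff ℝ (⊤ : ℕ∞) w) (hpos : ∀ x, 0 < w x)
    (hFint : Integrable (fun x => ‖gradient w x‖ ^ 2))
    (hAint : Integrable (fun x => w x ^ (2 * (m + (n : ℝ) - k) / (m + (n : ℝ) - 2))))
    (hBint : Integrable (fun x => w x ^ (2 * (m + (n : ℝ)) / (m + (n : ℝ) - 2))))
    (hL2 : Integrable (fun x => w x ^ 2))
    (hF : 0 < gnsF n w) (hA : 0 < gnsA n m k w) (hB : 0 < gnsB n m w)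
    (hEL1 : ∀ x, -lapl w x
        + (2 * m * (m + n - k) / ((n : ℝ) * k * (m + n - 2))) * (gnsF n w / gnsA n m k w) *
          w x ^ ((m + n + 2 - 2 * k) / (m + (n : ℝ) - 2))
      = ((m + n) * (2 * m + k * ((n : ℝ) - 2)) / ((n : ℝ) * k * (m + n - 2))) *
          (gnsF n w / gnsB n m w) * w x ^ ((m + (n : ℝ) + 2) / (m + (n : ℝ) - 2)))
    (hEL2 : ∀ x, ‖gradient w x‖ ^ 2
        - ((m + n - 2) / (2 * (m + n - 1))) * lapl (fun y => w y ^ 2) x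
        + (2 * (m - k) / ((n : ℝ) * k)) * (gnsF n w / gnsA n m k w) *
          w x ^ (2 * (m + n - k) / (m + (n : ℝ) - 2))
      = ((2 * m + k * ((n : ℝ) - 2)) / ((n : ℝ) * k)) * (gnsF n w / gnsB n m w) *
          w x ^ (2 * (m + n) / (m + (n : ℝ) - 2))) :
    k = 1 ∧
      (∃ (α : ℝ) (b : EuclideanSpace ℝ (Fin n)) (γ : ℝ), 0 < α ∧ 4 * α * γ > ‖b‖ ^ 2 ∧
        ∀ x, w x ^ (-2 / (m + (n : ℝ) - 2)) = α * ‖x‖ ^ 2 + ⟪b, x⟫ + γ) ∧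
      (∀ x i j, hess (fun y => w y ^ (-2 / (m + (n : ℝ) - 2))) x i j =
        (lapl (fun y => w y ^ (-2 / (m + (n : ℝ) - 2))) x / n) * (if i = j then 1 else 0)) ∧
      (∃ c : ℝ, ∀ x, lapl (fun y => w y ^ (-2 / (m + (n : ℝ) - 2))) x = c) :=
  gns_doubly_critical_euclidean_general (by omega) hm hk (div_pos hF hA) (div_pos hF hB)
    (hsmooth.of_le (by norm_cast)) hpos ⟨hEL1, hEL2⟩
end
end
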